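/- Let X_star = U_star·Σ_star·V_star^T be the compact SVD of a rank-r matrix X_star ∈ R^{n₁×n₂}, set L_star = U_star·Σ_star^{1/2}, R_star = V_star·Σ_star^{1/2}, and F_star = [L_star; R_star]. For any L ∈ R^{n₁×r}, R ∈ R^{n₂×r} with F = [L; R], define dist(F, F_star) := inf over invertible Q ∈ GL(r) of sqrt(‖(LQ − L_star)Σ_star^{1/2}‖_F² + ‖(RQ^{-T} − R_star)Σ_star^{1/2}‖_F²). Then dist(F, F_star) ≤ sqrt(√2 + 1)·‖L·R^T − X_star‖_F. -/

import Mathlib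

open Matrix

/-- Frobenius norm of a real matrix. -/
noncomputable def frob {n₁ n₂ : ℕ} (A : Matrix (Fin n₁) (Fin n₂) ℝ) : ℝ :=
  Real.sqrt (∑ i, ∑ j, (A i j) ^ 2)

/-- The scaled distance `dist(F, F_star)`: the infimum over invertible `Q` of
`sqrt(‖(LQ − L_star)Σ_star^{1/2}‖_F² + ‖(RQ^{-T} − R_star)Σ_star^{1/2}‖_F²)`,
where `Σ_star = diagonal σ`. -/
noncomputable def distF {n₁ n₂ r : ℕ}
    (L : Matrix (Fin n₁) (Fin r) ℝ) (R : Matrix (Fin n₂) (Fin r) ℝ)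
    (Lstar : Matrix (Fin n₁) (Fin r) ℝ) (Rstar : Matrix (Fin n₂) (Fin r) ℝ)
    (σ : Fin r → ℝ) : ℝ :=
  sInf {c : ℝ | ∃ Q : Matrix (Fin r) (Fin r) ℝ, IsUnit Q ∧
    c = Real.sqrt
      ((frob ((L * Q - Lstar) * Matrix.diagonal (fun i => Real.sqrt (σ i)))) ^ 2 +
       (frob ((R * (Q⁻¹)ᵀ - Rstar) * Matrix.diagonal (fun i => Real.sqrt (σ i)))) ^ 2)}

/-!
The infimum defining `distF` need not be attained when `L` or `R` is rank deficient, so the Gram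
matrices are regularised to `S = LᵀL + ε` and `T = RᵀR + ε`. There is an invertible `Q` with
`QᵀSQ = Q⁻¹TQ⁻ᵀ =: M`, unique up to an orthogonal factor on the right, and a polar decomposition
lets this factor make `P = L_starᵀLQ + R_starᵀRQ⁻ᵀ` positive semidefinite. Then `B = M - P + Σ_star`
is positive semidefinite and `2B` dominates the sum of the Gram matrices of the errors `LQ - L_star`
and `RQ⁻ᵀ - R_star`, so `2 tr(BΣ_star)` bounds the squared scaled error. The constant comes from
`2(√2 - 1) tr(BΣ_star) ≤ tr M² + tr Σ_star² - tr P² / 2`, whose right-hand side is at most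
`‖LRᵀ - X_star‖² + tr(ST) - tr(LᵀL RᵀR)`; the excess over the residual vanishes as `ε → 0`.
-/

section LinearAlgebra

variable {𝕜 : Type*} [RCLike 𝕜]

theorem exists_linearIsometry_apply_eq {E F : Type*} [AddCommGroup E] [Module 𝕜 E]
    [NormedAddCommGroup F] [InnerProductSpace 𝕜 F] [FiniteDimensional 𝕜 F]
    {f g : E →ₗ[𝕜] F} (h : ∀ x, ‖f x‖ = ‖g x‖) :
    ∃ u : F →ₗᵢ[𝕜] F, ∀ x, u (f x) = g x := by
  have hker : f.ker ≤ g.ker := fun x hx ↦ by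
    rw [LinearMap.mem_ker, ← norm_eq_zero, ← h, norm_eq_zero]
    exact hx
  let v : f.range →ₗ[𝕜] F := f.ker.liftQ g hker ∘ₗ f.quotKerEquivRange.symm
  have hv (x : E) : v ⟨f x, f.mem_range_self x⟩ = g x := by
    simp [v, LinearMap.quotKerEquivRange_symm_apply_image]
  let u : f.range →ₗᵢ[𝕜] F := ⟨v, by
    rintro ⟨-, x, rfl⟩
    rw [hv]
    exact (h x).symm⟩
  exact ⟨u.extend, fun x ↦ (u.extend_apply ⟨f x, f.mem_range_self x⟩).trans (hv x)⟩

variable {m n : Type*} [Fintype m]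

theorem norm_toEuclideanLin_apply_sq [Fintype n] [DecidableEq n] (A : Matrix m n 𝕜)
    (x : EuclideanSpace 𝕜 n) :
    ‖toEuclideanLin A x‖ ^ 2 = RCLike.re (inner 𝕜 x (toEuclideanLin (Aᴴ * A) x)) := by
  classical
  rw [toLpLin_mul_same, toEuclideanLin_conjTranspose_eq_adjoint, LinearMap.comp_apply,
    LinearMap.adjoint_inner_right, norm_sq_eq_re_inner (𝕜 := 𝕜)]

variable [DecidableEq m]

theorem mem_unitaryGroup_of_toEuclideanLin_eq {W : Matrix m m 𝕜}
    {u : EuclideanSpace 𝕜 m →ₗᵢ[𝕜] EuclideanSpace 𝕜 m}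
    (hW : toEuclideanLin W = u.toLinearMap) : W ∈ unitaryGroup m 𝕜 := by
  rw [mem_unitaryGroup_iff']
  apply toEuclideanLin.injective
  refine LinearMap.ext fun x ↦ ext_inner_left 𝕜 fun y ↦ ?_
  rw [star_eq_conjTranspose, toLpLin_mul_same, toEuclideanLin_conjTranspose_eq_adjoint, hW,
    LinearMap.comp_apply, LinearMap.adjoint_inner_right, toLpLin_one]
  exact u.inner_map_map y x

theorem exists_mem_unitaryGroup_mul_eq [Finite n] {A B : Matrix m n 𝕜} (h : Aᴴ * A = Bᴴ * B) :
    ∃ W ∈ unitaryGroup m 𝕜, W * A = B := by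
  classical
  have := Fintype.ofFinite n
  have hnorm (x : EuclideanSpace 𝕜 n) : ‖toEuclideanLin A x‖ = ‖toEuclideanLin B x‖ := by
    rw [← sq_eq_sq₀ (norm_nonneg _) (norm_nonneg _), norm_toEuclideanLin_apply_sq,
      norm_toEuclideanLin_apply_sq, h]
  obtain ⟨u, hu⟩ := exists_linearIsometry_apply_eq hnorm
  obtain ⟨W, hW⟩ := toEuclideanLin.surjective u.toLinearMap
  refine ⟨W, mem_unitaryGroup_of_toEuclideanLin_eq hW, toEuclideanLin.injective ?_⟩
  refine LinearMap.ext fun x ↦ ?_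
  rw [toLpLin_mul_same, hW]
  exact hu x

open scoped MatrixOrder ComplexOrder

variable [Fintype n]

-- `W` is the geometric mean of `S⁻¹` and `T`.
theorem exists_posDef_mul_mul_eq {S T : Matrix n n 𝕜} (hS : S.PosDef) (hT : T.PosDef) :
    ∃ W : Matrix n n 𝕜, W.PosDef ∧ W * S * W = T := by
  classical
  have hB : (CFC.sqrt S).PosDef := (IsStrictlyPositive.sqrt S hS.isStrictlyPositive).posDef
  have hBB : CFC.sqrt S * CFC.sqrt S = S := CFC.sqrt_mul_sqrt_self S hS.posSemidef.nonneg
  set B := CFC.sqrt S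
  have hBTB : (B * T * B).PosDef := by
    have := (IsUnit.posDef_star_left_conjugate_iff hB.isUnit).2 hT
    rwa [star_eq_conjTranspose, hB.isHermitian] at this
  have hC : (CFC.sqrt (B * T * B)).PosDef :=
    (IsStrictlyPositive.sqrt _ hBTB.isStrictlyPositive).posDef
  have hCC := CFC.sqrt_mul_sqrt_self _ hBTB.posSemidef.nonneg
  set C := CFC.sqrt (B * T * B)
  have := hB.isUnit.invertible
  refine ⟨B⁻¹ * C * B⁻¹, ?_, ?_⟩
  · have := (IsUnit.posDef_star_left_conjugate_iff hB.inv.isUnit).2 hC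
    rwa [star_eq_conjTranspose, hB.inv.isHermitian] at this
  · calc B⁻¹ * C * B⁻¹ * S * (B⁻¹ * C * B⁻¹)
        = B⁻¹ * (C * C) * B⁻¹ := by simp [← hBB, mul_assoc]
      _ = T := by simp [hCC, mul_assoc]

variable [DecidableEq n]

theorem exists_mem_unitaryGroup_mul_posSemidef (A : Matrix n n 𝕜) :
    ∃ W ∈ unitaryGroup n 𝕜, (A * W).PosSemidef := by
  have hP : (CFC.sqrt (A * Aᴴ)).PosSemidef := nonneg_iff_posSemidef.1 (CFC.sqrt_nonneg _)
  have hPP : (CFC.sqrt (A * Aᴴ))ᴴ * CFC.sqrt (A * Aᴴ) = Aᴴᴴ * Aᴴ := by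
    rw [hP.isHermitian, conjTranspose_conjTranspose,
      CFC.sqrt_mul_sqrt_self _ (posSemidef_self_mul_conjTranspose A).nonneg]
  obtain ⟨W, hW, hWA⟩ := exists_mem_unitaryGroup_mul_eq hPP
  refine ⟨W, hW, ?_⟩
  rwa [← conjTranspose_conjTranspose A, ← hWA, conjTranspose_mul, mul_assoc,
    ← star_eq_conjTranspose W, mem_unitaryGroup_iff'.1 hW, mul_one, hP.isHermitian]

theorem exists_isUnit_balanced {S T : Matrix n n 𝕜} (hS : S.PosDef) (hT : T.PosDef) :
    ∃ Q : Matrix n n 𝕜, IsUnit Q ∧ Qᴴ * S * Q = Q⁻¹ * T * Q⁻¹ᴴ := by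
  obtain ⟨W, hW, rfl⟩ := exists_posDef_mul_mul_eq hS hT
  have hQ : (CFC.sqrt W).PosDef := (IsStrictlyPositive.sqrt W hW.isStrictlyPositive).posDef
  have := hQ.isUnit.invertible
  refine ⟨CFC.sqrt W, hQ.isUnit, ?_⟩
  rw [hQ.isHermitian, hQ.inv.isHermitian]
  nth_rw 4 5 [← CFC.sqrt_mul_sqrt_self W hW.posSemidef.nonneg]
  simp [mul_assoc]

theorem exists_isUnit_balanced_aligned {S T : Matrix n n 𝕜} (hS : S.PosDef) (hT : T.PosDef)
    (G H : Matrix n n 𝕜) :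
    ∃ Q : Matrix n n 𝕜, IsUnit Q ∧ Qᴴ * S * Q = Q⁻¹ * T * Q⁻¹ᴴ ∧
      (G * Q + H * Q⁻¹ᴴ).PosSemidef := by
  obtain ⟨Q, hQ, hbal⟩ := exists_isUnit_balanced hS hT
  obtain ⟨W, hW, hpos⟩ := exists_mem_unitaryGroup_mul_posSemidef (G * Q + H * Q⁻¹ᴴ)
  have hW_inv : W⁻¹ = Wᴴ := inv_eq_left_inv (mem_unitaryGroup_iff'.1 hW)
  refine ⟨Q * W, hQ.mul (.of_mul_eq_one _ (mem_unitaryGroup_iff.1 hW)), ?_, ?_⟩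
  · rw [Matrix.mul_inv_rev, hW_inv]
    calc (Q * W)ᴴ * S * (Q * W) = Wᴴ * (Qᴴ * S * Q) * W := by
          simp only [conjTranspose_mul, mul_assoc]
      _ = Wᴴ * Q⁻¹ * T * (Wᴴ * Q⁻¹)ᴴ := by
          simp only [hbal, conjTranspose_mul, conjTranspose_conjTranspose, mul_assoc]
  · simpa only [Matrix.mul_inv_rev, hW_inv, conjTranspose_mul, conjTranspose_conjTranspose,
      add_mul, mul_assoc] using hpos

end LinearAlgebra

section Trace

variable {k m n : Type*} [Fintype m] [Fintype n]

theorem posDef_transpose_mul_self_add_smul_one [Finite k] [DecidableEq k]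
    (A : Matrix m k ℝ) {ε : ℝ} (hε : 0 < ε) :
    (Aᵀ * A + ε • (1 : Matrix k k ℝ)).PosDef :=
  PosDef.posSemidef_add (posSemidef_conjTranspose_mul_self A) (PosDef.one.smul hε)

theorem posSemidef_two_smul_sub_error {L L' : Matrix m k ℝ} {R R' : Matrix n k ℝ}
    {M S : Matrix k k ℝ} (hL' : L'ᵀ * L' = S) (hR' : R'ᵀ * R' = S)
    (hL : (M - Lᵀ * L).PosSemidef) (hR : (M - Rᵀ * R).PosSemidef)
    (hP : (L'ᵀ * L + R'ᵀ * R).IsSymm) :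
    ((2 : ℝ) • (M - (L'ᵀ * L + R'ᵀ * R) + S) -
      ((L - L')ᵀ * (L - L') + (R - R')ᵀ * (R - R'))).PosSemidef := by
  have hP' : R'ᵀ * R = Lᵀ * L' + Rᵀ * R' - L'ᵀ * L := by
    rw [eq_sub_iff_add_eq']
    simpa only [transpose_add, transpose_mul, transpose_transpose] using hP.eq.symm
  convert hL.add hR using 1
  simp only [transpose_sub, Matrix.sub_mul, Matrix.mul_sub, hL', hR', hP']
  module

open scoped MatrixOrder ComplexOrder in
theorem trace_mul_nonneg_of_posSemidef {𝕜 : Type*} [RCLike 𝕜] {A B : Matrix n n 𝕜}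
    (hA : A.PosSemidef) (hB : B.PosSemidef) : 0 ≤ (A * B).trace := by
  classical
  obtain ⟨C, rfl⟩ := CStarAlgebra.nonneg_iff_eq_star_mul_self.mp hB.nonneg
  rw [← mul_assoc, trace_mul_comm, ← mul_assoc]
  exact (hA.mul_mul_conjTranspose_same C).trace_nonneg

theorem trace_transpose_mul_self_nonneg (A : Matrix m n ℝ) : 0 ≤ (Aᵀ * A).trace :=
  (posSemidef_conjTranspose_mul_self A).trace_nonneg

theorem four_mul_trace_transpose_mul_le (A B : Matrix m n ℝ) :
    4 * (Aᵀ * B).trace ≤ ((A + B)ᵀ * (A + B)).trace := by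
  have hcomm : (Bᵀ * A).trace = (Aᵀ * B).trace := by
    rw [← trace_transpose, transpose_mul, transpose_transpose]
  have h := trace_transpose_mul_self_nonneg (A - B)
  simp only [transpose_sub, transpose_add, Matrix.sub_mul, Matrix.mul_sub, Matrix.add_mul,
    Matrix.mul_add, trace_sub, trace_add, hcomm] at h ⊢
  linarith

variable [Fintype k]

theorem trace_residual_gram {α : Type*} [CommRing α] (L L' : Matrix m k α)
    (R R' : Matrix n k α) :
    ((L * Rᵀ - L' * R'ᵀ)ᵀ * (L * Rᵀ - L' * R'ᵀ)).trace =
      (Lᵀ * L * (Rᵀ * R)).trace + (L'ᵀ * L' * (R'ᵀ * R')).trace -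
        2 * ((L'ᵀ * L)ᵀ * (R'ᵀ * R)).trace := by
  have hcross (A B : Matrix m k α) (C D : Matrix n k α) :
      ((A * Cᵀ)ᵀ * (B * Dᵀ)).trace = (Aᵀ * B * (Dᵀ * C)).trace := by
    rw [transpose_mul, transpose_transpose, Matrix.mul_assoc, trace_mul_comm]
    simp only [Matrix.mul_assoc]
  have hsymm : (L'ᵀ * L * (Rᵀ * R')).trace = (Lᵀ * L' * (R'ᵀ * R)).trace := by
    rw [← trace_transpose, transpose_mul, trace_mul_comm]
    simp only [transpose_mul, transpose_transpose]
  rw [transpose_sub, Matrix.sub_mul, Matrix.mul_sub, Matrix.mul_sub]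
  simp only [trace_sub, hcross, hsymm]
  rw [transpose_mul, transpose_transpose]
  ring

theorem two_mul_sqrt_two_sub_one_mul_trace_mul_le {B P S : Matrix n n ℝ} (hB : B.IsSymm)
    (hP : P.IsSymm) (hS : S.IsSymm) (hBP : 0 ≤ (B * P).trace) :
    2 * (√2 - 1) * (B * S).trace ≤
      ((B + P - S) * (B + P - S)).trace + (S * S).trace - (P * P).trace / 2 := by
  have hsq : √2 * √2 = 2 := Real.mul_self_sqrt zero_le_two
  have hBP' : 0 ≤ (2 - √2) * (B * P).trace :=
    mul_nonneg (sub_nonneg.2 (Real.sqrt_le_iff.2 (by norm_num))) hBP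
  -- Right minus left equals `‖B + (√2 / 2) (P - 2 S)‖² + (2 - √2) tr (B P)`.
  have h := trace_transpose_mul_self_nonneg (B + (√2 / 2) • (P - (2 : ℝ) • S))
  simp only [transpose_add, transpose_sub, transpose_smul, hB.eq, hP.eq, hS.eq, Matrix.add_mul,
    Matrix.mul_add, Matrix.sub_mul, Matrix.mul_sub, Matrix.smul_mul, Matrix.mul_smul, smul_add,
    smul_sub, smul_smul, trace_add, trace_sub, trace_smul, smul_eq_mul, trace_mul_comm P B,
    trace_mul_comm S B, trace_mul_comm S P] at h ⊢
  linear_combination h + hBP' + ((P * P).trace / 4 - (P * S).trace + (S * S).trace) * hsq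

theorem trace_error_add_trace_error_le {L L' : Matrix m k ℝ} {R R' : Matrix n k ℝ}
    {M S : Matrix k k ℝ} (hL' : L'ᵀ * L' = S) (hR' : R'ᵀ * R' = S)
    (hL : (M - Lᵀ * L).PosSemidef) (hR : (M - Rᵀ * R).PosSemidef)
    (hP : (L'ᵀ * L + R'ᵀ * R).PosSemidef) :
    ((L - L')ᵀ * (L - L') * S).trace + ((R - R')ᵀ * (R - R') * S).trace ≤
      (√2 + 1) * (((L * Rᵀ - L' * R'ᵀ)ᵀ * (L * Rᵀ - L' * R'ᵀ)).trace +
        ((M * M).trace - (Lᵀ * L * (Rᵀ * R)).trace)) := by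
  have hP_symm := isHermitian_iff_isSymm.1 hP.isHermitian
  have h2BE := posSemidef_two_smul_sub_error hL' hR' hL hR hP_symm
  have hPP := four_mul_trace_transpose_mul_le (L'ᵀ * L) (R'ᵀ * R)
  rw [hP_symm.eq] at hPP
  have hres := trace_residual_gram L L' R R'
  rw [hL', hR'] at hres
  set P := L'ᵀ * L + R'ᵀ * R
  set B := M - P + S with hB_def
  have hS : S.PosSemidef := hL' ▸ posSemidef_conjTranspose_mul_self L'
  have hE : ((L - L')ᵀ * (L - L') + (R - R')ᵀ * (R - R')).PosSemidef :=
    (posSemidef_conjTranspose_mul_self _).add (posSemidef_conjTranspose_mul_self _)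
  have hB : B.PosSemidef := by
    simpa [smul_smul] using (h2BE.add hE).smul (show (0 : ℝ) ≤ 1 / 2 by norm_num)
  have hES := trace_mul_nonneg_of_posSemidef h2BE hS
  have hcore := two_mul_sqrt_two_sub_one_mul_trace_mul_le
    (isHermitian_iff_isSymm.1 hB.isHermitian) hP_symm (isHermitian_iff_isSymm.1 hS.isHermitian)
    (trace_mul_nonneg_of_posSemidef hB hP)
  rw [show B + P - S = M by rw [hB_def]; abel] at hcore
  have hsq : √2 * √2 = 2 := Real.mul_self_sqrt zero_le_two
  simp only [Matrix.sub_mul, Matrix.add_mul, Matrix.smul_mul, trace_sub, trace_add, trace_smul,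
    smul_eq_mul] at hES
  calc ((L - L')ᵀ * (L - L') * S).trace + ((R - R')ᵀ * (R - R') * S).trace
      ≤ 2 * (B * S).trace := by linarith
    _ = (√2 + 1) * (2 * (√2 - 1) * (B * S).trace) := by
        linear_combination (-2 * (B * S).trace) * hsq
    _ ≤ (√2 + 1) * ((M * M).trace + (S * S).trace - (P * P).trace / 2) := by gcongr
    _ ≤ _ := by
        gcongr
        linarith

variable [DecidableEq k]

theorem trace_congr_mul_inv_congr {α : Type*} [CommRing α] {Q : Matrix k k α}
    (hQ : IsUnit Q) (A B : Matrix k k α) :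
    (Qᵀ * A * Q * (Q⁻¹ * B * Q⁻¹ᵀ)).trace = (A * B).trace := by
  have := hQ.invertible
  calc (Qᵀ * A * Q * (Q⁻¹ * B * Q⁻¹ᵀ)).trace = (Qᵀ * (A * B * Q⁻¹ᵀ)).trace := by
        simp [mul_assoc]
    _ = (A * B).trace := by
        rw [trace_mul_comm, mul_assoc, ← transpose_mul, Matrix.mul_inv_of_invertible,
          transpose_one, mul_one]

theorem posSemidef_regularized_gram_sub (A : Matrix m k ℝ) (Q : Matrix k k ℝ) {ε : ℝ}
    (hε : 0 ≤ ε) :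
    (Qᵀ * (Aᵀ * A + ε • (1 : Matrix k k ℝ)) * Q - (A * Q)ᵀ * (A * Q)).PosSemidef := by
  have h : Qᵀ * (Aᵀ * A + ε • (1 : Matrix k k ℝ)) * Q - (A * Q)ᵀ * (A * Q) = ε • (Qᵀ * Q) := by
    simp [mul_add, add_mul, Matrix.mul_assoc]
  exact h ▸ (posSemidef_conjTranspose_mul_self Q).smul hε

theorem exists_isUnit_trace_error_le {L L' : Matrix m k ℝ} {R R' : Matrix n k ℝ}
    {S : Matrix k k ℝ} (hL' : L'ᵀ * L' = S) (hR' : R'ᵀ * R' = S) {ε : ℝ} (hε : 0 < ε) :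
    ∃ Q : Matrix k k ℝ, IsUnit Q ∧
      ((L * Q - L')ᵀ * (L * Q - L') * S).trace +
          ((R * Q⁻¹ᵀ - R')ᵀ * (R * Q⁻¹ᵀ - R') * S).trace ≤
        (√2 + 1) * (((L * Rᵀ - L' * R'ᵀ)ᵀ * (L * Rᵀ - L' * R'ᵀ)).trace +
          (((Lᵀ * L + ε • (1 : Matrix k k ℝ)) * (Rᵀ * R + ε • (1 : Matrix k k ℝ))).trace -
            (Lᵀ * L * (Rᵀ * R)).trace)) := by
  obtain ⟨Q, hQ, hbal, hpos⟩ := exists_isUnit_balanced_aligned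
    (posDef_transpose_mul_self_add_smul_one L hε) (posDef_transpose_mul_self_add_smul_one R hε)
    (L'ᵀ * L) (R'ᵀ * R)
  simp only [conjTranspose_eq_transpose_of_trivial, Matrix.mul_assoc _ L, Matrix.mul_assoc _ R]
    at hbal hpos
  refine ⟨Q, hQ, ?_⟩
  have := hQ.invertible
  have hLM := posSemidef_regularized_gram_sub L Q hε.le
  have hRM := posSemidef_regularized_gram_sub R Q⁻¹ᵀ hε.le
  rw [transpose_transpose, ← hbal] at hRM
  have hLR : L * Q * (R * Q⁻¹ᵀ)ᵀ = L * Rᵀ := by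
    simp [Matrix.mul_assoc]
  have hgram : ((L * Q)ᵀ * (L * Q) * ((R * Q⁻¹ᵀ)ᵀ * (R * Q⁻¹ᵀ))).trace =
      (Lᵀ * L * (Rᵀ * R)).trace := by
    rw [← trace_congr_mul_inv_congr hQ (Lᵀ * L)]
    simp only [transpose_mul, transpose_transpose, Matrix.mul_assoc]
  have h := trace_error_add_trace_error_le hL' hR' hLM hRM hpos
  rw [hLR, hgram] at h
  nth_rw 2 [hbal] at h
  rwa [trace_congr_mul_inv_congr hQ] at h

end Trace

section DiagonalSqrt

variable {k m n : Type*} [Fintype k] [DecidableEq k]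

theorem diagonal_sqrt_mul_self {σ : k → ℝ} (hσ : 0 ≤ σ) :
    diagonal (fun i ↦ √(σ i)) * diagonal (fun i ↦ √(σ i)) = diagonal σ := by
  simp [diagonal_mul_diagonal, Real.mul_self_sqrt (hσ _)]

theorem transpose_mul_self_mul_diagonal_sqrt [Fintype m] {U : Matrix m k ℝ}
    (hU : Uᵀ * U = 1) {σ : k → ℝ} (hσ : 0 ≤ σ) :
    (U * diagonal (fun i ↦ √(σ i)))ᵀ * (U * diagonal (fun i ↦ √(σ i))) = diagonal σ := by
  rw [transpose_mul, diagonal_transpose, Matrix.mul_assoc, ← Matrix.mul_assoc Uᵀ, hU,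
    Matrix.one_mul, diagonal_sqrt_mul_self hσ]

theorem mul_diagonal_sqrt_mul_transpose (U : Matrix m k ℝ) (V : Matrix n k ℝ)
    {σ : k → ℝ} (hσ : 0 ≤ σ) :
    U * diagonal (fun i ↦ √(σ i)) * (V * diagonal (fun i ↦ √(σ i)))ᵀ = U * diagonal σ * Vᵀ := by
  rw [← diagonal_sqrt_mul_self hσ, transpose_mul, diagonal_transpose]
  simp only [Matrix.mul_assoc]

end DiagonalSqrt

section ScaledDistance

variable {n₁ n₂ r : ℕ}

theorem frob_nonneg (A : Matrix (Fin n₁) (Fin n₂) ℝ) : 0 ≤ frob A :=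
  Real.sqrt_nonneg _

theorem frob_sq (A : Matrix (Fin n₁) (Fin n₂) ℝ) : frob A ^ 2 = (Aᵀ * A).trace := by
  rw [frob, Real.sq_sqrt (by positivity), Finset.sum_comm]
  simp only [trace, diag_apply, mul_apply, transpose_apply, sq]

theorem frob_mul_diagonal_sqrt_sq (A : Matrix (Fin n₁) (Fin r) ℝ) {σ : Fin r → ℝ} (hσ : 0 ≤ σ) :
    frob (A * diagonal (fun i ↦ √(σ i))) ^ 2 = (Aᵀ * A * diagonal σ).trace := by
  rw [frob_sq, transpose_mul, diagonal_transpose, Matrix.mul_assoc, trace_mul_comm,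
    ← diagonal_sqrt_mul_self hσ]
  simp only [Matrix.mul_assoc]

theorem distF_le_of_isUnit (L L' : Matrix (Fin n₁) (Fin r) ℝ) (R R' : Matrix (Fin n₂) (Fin r) ℝ)
    {σ : Fin r → ℝ} (hσ : 0 ≤ σ) {Q : Matrix (Fin r) (Fin r) ℝ} (hQ : IsUnit Q) :
    distF L R L' R' σ ≤ √(((L * Q - L')ᵀ * (L * Q - L') * diagonal σ).trace +
      ((R * Q⁻¹ᵀ - R')ᵀ * (R * Q⁻¹ᵀ - R') * diagonal σ).trace) := by
  rw [← frob_mul_diagonal_sqrt_sq _ hσ, ← frob_mul_diagonal_sqrt_sq _ hσ]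
  exact csInf_le ⟨0, by rintro _ ⟨_, _, rfl⟩; exact Real.sqrt_nonneg _⟩ ⟨Q, hQ, rfl⟩

theorem distF_le_frob_general (L L' : Matrix (Fin n₁) (Fin r) ℝ)
    (R R' : Matrix (Fin n₂) (Fin r) ℝ) {σ : Fin r → ℝ} (hL' : L'ᵀ * L' = diagonal σ)
    (hR' : R'ᵀ * R' = diagonal σ) :
    distF L R L' R' σ ≤ √(√2 + 1) * frob (L * Rᵀ - L' * R'ᵀ) := by
  have hσ : 0 ≤ σ :=
    posSemidef_diagonal_iff.1 (hL' ▸ posSemidef_conjTranspose_mul_self L')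
  let bound (ε : ℝ) : ℝ := √((√2 + 1) * (frob (L * Rᵀ - L' * R'ᵀ) ^ 2 +
    (((Lᵀ * L + ε • 1) * (Rᵀ * R + ε • 1)).trace - (Lᵀ * L * (Rᵀ * R)).trace)))
  have hbound (ε : ℝ) (hε : 0 < ε) : distF L R L' R' σ ≤ bound ε := by
    obtain ⟨Q, hQ, hle⟩ := exists_isUnit_trace_error_le (L := L) (R := R) hL' hR' hε
    rw [← frob_sq] at hle
    exact (distF_le_of_isUnit L L' R R' hσ hQ).trans (Real.sqrt_le_sqrt hle)
  have hcont : Continuous bound := by fun_prop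
  have hbound_zero : bound 0 = √(√2 + 1) * frob (L * Rᵀ - L' * R'ᵀ) := by
    simp [bound, Real.sqrt_mul (show 0 ≤ √2 + 1 by positivity), Real.sqrt_sq (frob_nonneg _)]
  rw [← hbound_zero]
  exact ge_of_tendsto (hcont.continuousWithinAt (s := Set.Ioi 0) (x := 0))
    (eventually_nhdsWithin_of_forall hbound)

end ScaledDistance

/-- `dist(F, F_star) ≤ sqrt(√2 + 1) ‖L Rᵀ − X_star‖_F`. -/
theorem distF_le_frob {n₁ n₂ r : ℕ}
    (Xstar : Matrix (Fin n₁) (Fin n₂) ℝ)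
    (Ustar : Matrix (Fin n₁) (Fin r) ℝ) (Vstar : Matrix (Fin n₂) (Fin r) ℝ)
    (σ : Fin r → ℝ) (hU : Ustarᵀ * Ustar = 1) (hV : Vstarᵀ * Vstar = 1)
    (hσ : ∀ i, 0 < σ i)
    (hX : Xstar = Ustar * Matrix.diagonal σ * Vstarᵀ)
    (Lstar : Matrix (Fin n₁) (Fin r) ℝ) (Rstar : Matrix (Fin n₂) (Fin r) ℝ)
    (hLstar : Lstar = Ustar * Matrix.diagonal (fun i => Real.sqrt (σ i)))
    (hRstar : Rstar = Vstar * Matrix.diagonal (fun i => Real.sqrt (σ i)))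
    (L : Matrix (Fin n₁) (Fin r) ℝ) (R : Matrix (Fin n₂) (Fin r) ℝ) :
    distF L R Lstar Rstar σ ≤ Real.sqrt (Real.sqrt 2 + 1) * frob (L * Rᵀ - Xstar) := by
  have hσ_nonneg : 0 ≤ σ := fun i ↦ (hσ i).le
  subst hLstar hRstar
  rw [hX, ← mul_diagonal_sqrt_mul_transpose Ustar Vstar hσ_nonneg]
  exact distF_le_frob_general L _ R _ (transpose_mul_self_mul_diagonal_sqrt hU hσ_nonneg)
    (transpose_mul_self_mul_diagonal_sqrt hV hσ_nonneg)
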